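/- Let e, b, c > 0 with e/b² ≥ 7/9 and c ≤ 1, let u(x) = c/(1+b²|x|²)², ρ = b³/(cπ²), and define v(x) = (−Δu(x) + 2e(2u(x) − ρ(u∗u)(x)))/(1 − u(x)). Then v(x) = 12c(b⁶|x|⁶(2e−b²) + b⁴|x|⁴(9e−7b²) + 4b²|x|²(3e−2b²) + (5e+16b²))/((1+b²|x|²)²(4+b²|x|²)²((1+b²|x|²)²−c)), and v(x) ≥ 0 for all x. -/

import Mathlib

open MeasureTheory Real

/-- The Euclidean Laplacian on ℝ³: sum of the second directional derivatives
along the standard basis directions. -/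
noncomputable def laplacian3 (f : EuclideanSpace ℝ (Fin 3) → ℝ)
    (x : EuclideanSpace ℝ (Fin 3)) : ℝ :=
  ∑ i : Fin 3,
    iteratedFDeriv ℝ 2 f x ![EuclideanSpace.single i 1, EuclideanSpace.single i 1]

/-!
The function `ρ u` is the Poisson kernel of the half-space `ℝ³ × (0, ∞)` at height `1 / b`. The
Poisson kernels form a convolution semigroup, so `ρ² (u ∗ u)` is the kernel at height `2 / b`; since
`u` is radial and rational, what remains of the formula for `v` is algebra. When `7 b² ≤ 9 e` and
`0 ≤ c ≤ 1`, every coefficient of the numerator and every factor of the denominator is nonnegative.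

For the semigroup law, Feynman's parametrization merges the kernels at heights `p` and `q`, centred
at `x` and at `0`, into a single power of a quadratic polynomial in `y`, integrated over a parameter
`r > 0`. After the integral in `y`, the substitution `w = p r - q / r` of Cauchy and Schlömilch
turns the remaining quadratic form into `(p + q)² + ‖x‖² + w²`.
-/

open Filter InnerProductSpace Laplacian Set Topology

section GammaIntegrals

variable {α : Type*} [MeasurableSpace α] {μ : Measure α}
variable {E : Type*} [NormedAddCommGroup E] [InnerProductSpace ℝ E] [FiniteDimensional ℝ E]
  [MeasurableSpace E] [BorelSpace E]

lemma lintegral_Ioi_rpow_mul_exp_neg_mul_sq {k A : ℝ} (hk : 0 < k) (hA : 0 < A) :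
    ∫⁻ r in Ioi (0 : ℝ), ENNReal.ofReal (r ^ (2 * k - 1) * exp (-A * r ^ 2))
      = ENNReal.ofReal (Gamma k / 2 * A ^ (-k)) := by
  have hq : -1 < 2 * k - 1 := by linarith
  have hint := integrableOn_rpow_mul_exp_neg_mul_rpow hq two_pos hA
  have hval := integral_rpow_mul_exp_neg_mul_rpow two_pos hq hA
  simp only [rpow_two] at hint hval
  rw [← ofReal_integral_eq_lintegral_ofReal hint, hval]
  · congr 1
    rw [show (2 * k - 1 + 1) / 2 = k by ring, show -(2 * k - 1 + 1) / 2 = -k by ring]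
    ring
  · filter_upwards [ae_restrict_mem measurableSet_Ioi] with r hr
    have := rpow_nonneg (le_of_lt hr) (2 * k - 1)
    positivity

lemma lintegral_rpow_neg_mul [SFinite μ] {k : ℝ} (hk : 0 < k) {f : α → ℝ}
    (hf : Measurable f) (hf_pos : ∀ᵐ a ∂μ, 0 < f a) {g : α → ENNReal} (hg : Measurable g) :
    ∫⁻ a, ENNReal.ofReal (f a ^ (-k)) * g a ∂μ
      = ENNReal.ofReal (2 / Gamma k) * ∫⁻ r in Ioi (0 : ℝ), ENNReal.ofReal (r ^ (2 * k - 1))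
          * ∫⁻ a, ENNReal.ofReal (exp (-f a * r ^ 2)) * g a ∂μ := by
  calc
    _ = ∫⁻ a, ENNReal.ofReal (2 / Gamma k) * (∫⁻ r in Ioi (0 : ℝ),
          ENNReal.ofReal (r ^ (2 * k - 1) * exp (-f a * r ^ 2)) * g a) ∂μ := by
      refine lintegral_congr_ae (hf_pos.mono fun a ha => ?_)
      dsimp only
      rw [lintegral_mul_const _ (by fun_prop), lintegral_Ioi_rpow_mul_exp_neg_mul_sq hk ha,
        ← mul_assoc, ← ENNReal.ofReal_mul (by positivity)]
      congr 2
      field_simp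
    _ = ENNReal.ofReal (2 / Gamma k) * ∫⁻ r in Ioi (0 : ℝ), ∫⁻ a,
          ENNReal.ofReal (r ^ (2 * k - 1) * exp (-f a * r ^ 2)) * g a ∂μ := by
      rw [lintegral_const_mul' _ _ ENNReal.ofReal_ne_top, lintegral_lintegral_swap]
      simp only [Function.uncurry_def]
      fun_prop
    _ = _ := by
      congr 1
      refine lintegral_congr fun r => ?_
      rw [← lintegral_const_mul _ (by fun_prop)]
      exact lintegral_congr fun a => by rw [ENNReal.ofReal_mul' (exp_pos _).le, mul_assoc]

lemma lintegral_exp_neg_add_norm_sq_mul (A : ℝ) {s : ℝ} (hs : 0 < s) :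
    ∫⁻ y : E, ENNReal.ofReal (exp (-(A + ‖y‖ ^ 2) * s))
      = ENNReal.ofReal (exp (-A * s) * (π / s) ^ ((Module.finrank ℝ E : ℝ) / 2)) := by
  have hval := GaussianFourier.integral_rexp_neg_mul_sq_norm (V := E) hs
  have hint : Integrable fun y : E => exp (-s * ‖y‖ ^ 2) :=
    .of_integral_ne_zero (by rw [hval]; positivity)
  have hsplit (y : E) : exp (-(A + ‖y‖ ^ 2) * s) = exp (-A * s) * exp (-s * ‖y‖ ^ 2) := by
    rw [← exp_add]
    ring_nf
  simp only [hsplit]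
  rw [← ofReal_integral_eq_lintegral_ofReal (hint.const_mul _)
    (.of_forall fun y => by positivity), integral_const_mul, hval]

lemma lintegral_add_norm_sq_rpow_neg {A k : ℝ} (hA : 0 < A)
    (hk : (Module.finrank ℝ E : ℝ) / 2 < k) :
    ∫⁻ y : E, ENNReal.ofReal ((A + ‖y‖ ^ 2) ^ (-k))
      = ENNReal.ofReal (π ^ ((Module.finrank ℝ E : ℝ) / 2)
          * (Gamma (k - (Module.finrank ℝ E : ℝ) / 2) / Gamma k)
          * A ^ (-(k - (Module.finrank ℝ E : ℝ) / 2))) := by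
  have hk_pos : 0 < k := lt_of_le_of_lt (by positivity) hk
  have hgauss (r : ℝ) (hr : r ∈ Ioi (0 : ℝ)) : ENNReal.ofReal (r ^ (2 * k - 1))
      * ∫⁻ y : E, ENNReal.ofReal (exp (-(A + ‖y‖ ^ 2) * r ^ 2))
      = ENNReal.ofReal (π ^ ((Module.finrank ℝ E : ℝ) / 2)) * ENNReal.ofReal
          (r ^ (2 * (k - (Module.finrank ℝ E : ℝ) / 2) - 1) * exp (-A * r ^ 2)) := by
    rw [lintegral_exp_neg_add_norm_sq_mul A (pow_pos hr 2)]
    generalize (Module.finrank ℝ E : ℝ) / 2 = d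
    rw [mem_Ioi] at hr
    rw [← ENNReal.ofReal_mul (by positivity), ← ENNReal.ofReal_mul (by positivity),
      div_rpow pi_pos.le (by positivity), ← rpow_natCast_mul hr.le,
      show 2 * (k - d) - 1 = 2 * k - 1 - (2 : ℕ) * d by push_cast; ring,
      rpow_sub hr (2 * k - 1)]
    congr 1
    ring
  have hmellin := lintegral_rpow_neg_mul (μ := (volume : Measure E)) hk_pos
    (f := fun y => A + ‖y‖ ^ 2) (by fun_prop) (.of_forall fun y => by positivity) measurable_one
  simp only [Pi.one_apply, mul_one] at hmellin
  rw [hmellin, setLIntegral_congr_fun measurableSet_Ioi hgauss,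
    lintegral_const_mul _ (by fun_prop),
    lintegral_Ioi_rpow_mul_exp_neg_mul_sq (sub_pos.2 hk) hA, ← ENNReal.ofReal_mul (by positivity),
    ← ENNReal.ofReal_mul (by positivity)]
  congr 1
  ring

lemma lintegral_add_sq_rpow_neg_add_half {A s : ℝ} (hA : 0 < A) (hs : 0 < s) :
    ∫⁻ w : ℝ, ENNReal.ofReal ((A + w ^ 2) ^ (-(s + 1 / 2)))
      = ENNReal.ofReal (π ^ (1 / 2 : ℝ) * (Gamma s / Gamma (s + 1 / 2)) * A ^ (-s)) := by
  have h := lintegral_add_norm_sq_rpow_neg (E := ℝ) (k := s + 1 / 2) hA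
  simp only [Module.finrank_self, Nat.cast_one, norm_eq_abs, sq_abs, add_sub_cancel_right] at h
  exact h (by linarith)

lemma lintegral_Ioi_rpow_mul_sq_mul_add_rpow_neg {A B a b : ℝ} (hA : 0 < A) (hB : 0 < B)
    (ha : 0 < a) (hb : 0 < b) :
    ∫⁻ r in Ioi (0 : ℝ), ENNReal.ofReal (r ^ (2 * a - 1) * (r ^ 2 * A + B) ^ (-(a + b)))
      = ENNReal.ofReal (Gamma a * Gamma b / (2 * Gamma (a + b)) * (A ^ (-a) * B ^ (-b))) := by
  have hinner (s : ℝ) (hs : s ∈ Ioi (0 : ℝ)) : ENNReal.ofReal (s ^ (2 * (a + b) - 1))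
      * ∫⁻ r in Ioi (0 : ℝ), ENNReal.ofReal (exp (-(r ^ 2 * A + B) * s ^ 2))
          * ENNReal.ofReal (r ^ (2 * a - 1))
      = ENNReal.ofReal (Gamma a / 2 * A ^ (-a))
          * ENNReal.ofReal (s ^ (2 * b - 1) * exp (-B * s ^ 2)) := by
    rw [mem_Ioi] at hs
    have hsplit (r : ℝ) : exp (-(r ^ 2 * A + B) * s ^ 2)
        = exp (-B * s ^ 2) * exp (-(A * s ^ 2) * r ^ 2) := by
      rw [← exp_add]
      ring_nf
    simp only [hsplit, ← ENNReal.ofReal_mul (mul_pos (exp_pos _) (exp_pos _)).le]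
    simp only [mul_assoc (exp (-B * s ^ 2)), ENNReal.ofReal_mul (exp_pos (-B * s ^ 2)).le,
      mul_comm (exp (-(A * s ^ 2) * _))]
    rw [lintegral_const_mul _ (by fun_prop),
      lintegral_Ioi_rpow_mul_exp_neg_mul_sq ha (by positivity),
      ← ENNReal.ofReal_mul (by positivity), ← ENNReal.ofReal_mul (by positivity),
      ← ENNReal.ofReal_mul (by positivity),
      mul_rpow hA.le (by positivity), ← rpow_natCast_mul hs.le,
      show 2 * (a + b) - 1 = (2 * b - 1) + 2 * a by ring, rpow_add hs,
      show ((2 : ℕ) : ℝ) * -a = -(2 * a) by push_cast; ring, rpow_neg hs.le]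
    congr 1
    field_simp
  have hmellin := lintegral_rpow_neg_mul (μ := volume.restrict (Ioi (0 : ℝ))) (add_pos ha hb)
    (f := fun r => r ^ 2 * A + B) (by fun_prop) (.of_forall fun r => by positivity)
    (g := fun r => ENNReal.ofReal (r ^ (2 * a - 1))) (by fun_prop)
  rw [setLIntegral_congr_fun measurableSet_Ioi hinner, lintegral_const_mul _ (by fun_prop),
    lintegral_Ioi_rpow_mul_exp_neg_mul_sq hb hB, ← ENNReal.ofReal_mul (by positivity),
    ← ENNReal.ofReal_mul (by positivity)] at hmellin
  calc
    _ = _ := lintegral_congr fun r => by rw [mul_comm, ENNReal.ofReal_mul (by positivity)]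
    _ = _ := hmellin
    _ = _ := by
      congr 1
      field_simp

end GammaIntegrals

section CauchySchlomilch

variable {p q : ℝ}

lemma hasDerivAt_const_div (k : ℝ) {r : ℝ} (hr : r ≠ 0) :
    HasDerivAt (fun r => k / r) (-(k / r ^ 2)) r := by
  simpa [div_eq_mul_inv] using (hasDerivAt_inv hr).const_mul k

lemma lintegral_Ioi_div_sq_mul_comp_div {k : ℝ} (hk : 0 < k) (G : ℝ → ENNReal) :
    ∫⁻ r in Ioi (0 : ℝ), ENNReal.ofReal (k / r ^ 2) * G (k / r) = ∫⁻ r in Ioi (0 : ℝ), G r := by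
  have himage : (fun r => k / r) '' Ioi 0 = Ioi 0 := by
    refine Subset.antisymm (image_subset_iff.2 fun r hr => div_pos hk hr) fun s hs =>
      ⟨k / s, div_pos hk hs, div_div_cancel₀ hk.ne'⟩
  have hinj : InjOn (fun r => k / r) (Ioi 0) := fun r _ s _ h => by
    simpa [div_div_cancel₀ hk.ne'] using congrArg (fun z => k / z) h
  conv_rhs => rw [← himage, lintegral_image_eq_lintegral_abs_deriv_mul measurableSet_Ioi
    (fun r hr => (hasDerivAt_const_div k (ne_of_gt hr)).hasDerivWithinAt) hinj]
  refine lintegral_congr fun r => ?_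
  rw [abs_neg, abs_of_nonneg (by positivity)]

lemma injOn_mul_sub_div (hp : 0 < p) (hq : 0 < q) : InjOn (fun r => p * r - q / r) (Ioi 0) := by
  refine StrictMonoOn.injOn fun r hr s _ hrs => ?_
  have := mul_lt_mul_of_pos_left hrs hp
  have := div_lt_div_of_pos_left hq hr hrs
  linarith

lemma image_mul_sub_div_Ioi (hp : 0 < p) (hq : 0 < q) :
    (fun r => p * r - q / r) '' Ioi 0 = univ := by
  refine eq_univ_of_forall fun w => ?_
  obtain ⟨R, hwR, hR⟩ : ∃ R, -w < R ∧ R ^ 2 = w ^ 2 + 4 * p * q := by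
    refine ⟨√(w ^ 2 + 4 * p * q), lt_sqrt_of_sq_lt ?_, sq_sqrt (by positivity)⟩
    linarith [neg_sq w, mul_pos hp hq]
  have hroot : 0 < w + R := by linarith
  refine ⟨(w + R) / (2 * p), div_pos hroot (by positivity), ?_⟩
  field_simp
  linear_combination hR

lemma lintegral_Ioi_add_div_sq_mul_comp_mul_sub_div (hp : 0 < p) (hq : 0 < q) (F : ℝ → ENNReal) :
    ∫⁻ r in Ioi (0 : ℝ), ENNReal.ofReal (p + q / r ^ 2) * F (p * r - q / r) = ∫⁻ w, F w := by
  have hderiv (r : ℝ) (hr : r ∈ Ioi 0) :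
      HasDerivWithinAt (fun r => p * r - q / r) (p + q / r ^ 2) (Ioi 0) r := by
    have := ((hasDerivAt_id r).const_mul p).sub (hasDerivAt_const_div q (ne_of_gt hr))
    exact (this.congr_deriv (by ring)).hasDerivWithinAt
  rw [← setLIntegral_univ F, ← image_mul_sub_div_Ioi hp hq,
    lintegral_image_eq_lintegral_abs_deriv_mul measurableSet_Ioi hderiv (injOn_mul_sub_div hp hq)]
  refine lintegral_congr fun r => ?_
  rw [abs_of_nonneg (by positivity)]

lemma lintegral_Ioi_one_add_one_div_sq_mul_comp_mul_sub_div (hp : 0 < p) (hq : 0 < q)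
    {F : ℝ → ENNReal} (hF : Measurable F) (hF_even : F.Even) :
    ∫⁻ r in Ioi (0 : ℝ), ENNReal.ofReal (1 + 1 / r ^ 2) * F (p * r - q / r)
      = ENNReal.ofReal ((1 / p + 1 / q) / 2) * ∫⁻ w, F w := by
  set X := ∫⁻ r in Ioi (0 : ℝ), F (p * r - q / r) with hX
  set Y := ∫⁻ r in Ioi (0 : ℝ), ENNReal.ofReal (1 / r ^ 2) * F (p * r - q / r) with hY
  have hreflect : X = ENNReal.ofReal (q / p) * Y := by
    rw [hX, hY, ← lintegral_Ioi_div_sq_mul_comp_div (div_pos hq hp),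
      ← lintegral_const_mul' _ _ ENNReal.ofReal_ne_top]
    refine lintegral_congr fun r => ?_
    rw [← mul_assoc, ← ENNReal.ofReal_mul (by positivity), mul_one_div, ← hF_even (p * r - q / r)]
    congr 2
    rw [div_div_eq_mul_div]
    field_simp
    ring
  have hsum : ENNReal.ofReal p * X + ENNReal.ofReal q * Y = ∫⁻ w, F w := by
    rw [← lintegral_Ioi_add_div_sq_mul_comp_mul_sub_div hp hq F, hX, hY,
      ← lintegral_const_mul' _ _ ENNReal.ofReal_ne_top,
      ← lintegral_const_mul' _ _ ENNReal.ofReal_ne_top, ← lintegral_add_left (by fun_prop)]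
    refine lintegral_congr fun r => ?_
    rw [← mul_assoc, ← ENNReal.ofReal_mul hq.le, ← add_mul,
      ← ENNReal.ofReal_add hp.le (by positivity), mul_one_div]
  have hsplit : ∫⁻ r in Ioi (0 : ℝ), ENNReal.ofReal (1 + 1 / r ^ 2) * F (p * r - q / r)
      = X + Y := by
    rw [hX, hY, ← lintegral_add_left (by fun_prop)]
    refine lintegral_congr fun r => ?_
    rw [ENNReal.ofReal_add zero_le_one (by positivity), ENNReal.ofReal_one, add_mul, one_mul]
  rw [hsplit, ← hsum, hreflect, ← mul_assoc, ← ENNReal.ofReal_mul hp.le, mul_div_cancel₀ _ hp.ne',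
    ← add_mul, ← ENNReal.ofReal_add hq.le hq.le, ← mul_assoc,
    ← ENNReal.ofReal_mul (by positivity), ← add_one_mul, ← ENNReal.ofReal_one,
    ← ENNReal.ofReal_add (by positivity) zero_le_one]
  congr 2
  field_simp
  norm_num

end CauchySchlomilch

section PoissonKernel

lemma rpow_mul_one_add_sq_rpow_mul_div_one_add_sq_rpow {r : ℝ} (hr : 0 < r) (s : ℝ) :
    r ^ (2 * s - 1) * ((1 + r ^ 2) ^ (-(s + s)) * ((r / (1 + r ^ 2)) ^ 2) ^ (-(s + 1 / 2)))
      = 1 + 1 / r ^ 2 := by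
  have h1 : 0 < 1 + r ^ 2 := by positivity
  rw [← rpow_natCast_mul (by positivity), show ((2 : ℕ) : ℝ) * -(s + 1 / 2) = -(2 * s + 1) by
    push_cast; ring, div_rpow hr.le h1.le, show 2 * s - 1 = (2 * s + 1) - (2 : ℕ) by
    push_cast; ring, show -(s + s) = -(2 * s + 1) + 1 by ring, rpow_sub_natCast hr.ne',
    rpow_add_one h1.ne', rpow_neg hr.le]
  field_simp
  ring

variable {E : Type*} [NormedAddCommGroup E] [InnerProductSpace ℝ E] {p q : ℝ}

lemma sq_mul_add_norm_sub_sq_add_norm_sq (p q : ℝ) {r : ℝ} (hr : r ≠ 0) (x y : E) :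
    r ^ 2 * (p ^ 2 + ‖x - y‖ ^ 2) + (q ^ 2 + ‖y‖ ^ 2)
      = (1 + r ^ 2) * ((r / (1 + r ^ 2)) ^ 2 * ((p + q) ^ 2 + ‖x‖ ^ 2 + (p * r - q / r) ^ 2)
        + ‖y - (r ^ 2 / (1 + r ^ 2)) • x‖ ^ 2) := by
  rw [norm_sub_sq_real, norm_sub_sq_real, inner_smul_right, norm_smul, mul_pow, norm_eq_abs,
    sq_abs, real_inner_comm y x]
  field_simp
  ring

variable (E) in
/-- The exponent `σ = (dim E + 1) / 2` in the Poisson kernel `p / (p ^ 2 + ‖x‖ ^ 2) ^ σ` of the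
half-space `E × (0, ∞)`. -/
noncomputable def poissonExponent : ℝ := ((Module.finrank ℝ E : ℝ) + 1) / 2

/-- The Poisson kernel of the half-space `E × (0, ∞)` at height `p`, as a function of the
horizontal variable. -/
noncomputable def halfSpacePoissonKernel (p : ℝ) (x : E) : ℝ :=
  Gamma (poissonExponent E) / π ^ poissonExponent E
    * (p * (p ^ 2 + ‖x‖ ^ 2) ^ (-poissonExponent E))

lemma poissonExponent_pos : 0 < poissonExponent E := by
  unfold poissonExponent
  positivity

lemma finrank_div_two_eq_poissonExponent_sub :
    (Module.finrank ℝ E : ℝ) / 2 = poissonExponent E - 1 / 2 := by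
  unfold poissonExponent
  ring

variable [FiniteDimensional ℝ E] [MeasurableSpace E] [BorelSpace E]

lemma lintegral_sq_mul_add_norm_sub_sq_add_rpow_neg {r : ℝ} (hp : 0 < p) (hq : 0 < q)
    (hr : 0 < r) (x : E) :
    ∫⁻ y : E, ENNReal.ofReal (r ^ (2 * poissonExponent E - 1)
        * (r ^ 2 * (p ^ 2 + ‖x - y‖ ^ 2) + (q ^ 2 + ‖y‖ ^ 2))
          ^ (-(poissonExponent E + poissonExponent E)))
      = ENNReal.ofReal (π ^ (poissonExponent E - 1 / 2)
          * (Gamma (poissonExponent E + 1 / 2) / Gamma (poissonExponent E + poissonExponent E)))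
        * (ENNReal.ofReal (1 + 1 / r ^ 2) * ENNReal.ofReal
          (((p + q) ^ 2 + ‖x‖ ^ 2 + (p * r - q / r) ^ 2) ^ (-(poissonExponent E + 1 / 2)))) := by
  set σ := poissonExponent E
  set W := (p + q) ^ 2 + ‖x‖ ^ 2 + (p * r - q / r) ^ 2
  have hσ : 0 < σ := poissonExponent_pos
  have hdim : (Module.finrank ℝ E : ℝ) / 2 = σ - 1 / 2 := finrank_div_two_eq_poissonExponent_sub
  have hW : 0 < W := by positivity
  have hM : 0 < (r / (1 + r ^ 2)) ^ 2 * W := by positivity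
  calc
    _ = ENNReal.ofReal (r ^ (2 * σ - 1) * (1 + r ^ 2) ^ (-(σ + σ)))
          * ∫⁻ y : E, ENNReal.ofReal (((r / (1 + r ^ 2)) ^ 2 * W
              + ‖y - (r ^ 2 / (1 + r ^ 2)) • x‖ ^ 2) ^ (-(σ + σ))) := by
      rw [← lintegral_const_mul' _ _ ENNReal.ofReal_ne_top]
      refine lintegral_congr fun y => ?_
      rw [sq_mul_add_norm_sub_sq_add_norm_sq p q hr.ne', mul_rpow (by positivity) (by positivity),
        ← mul_assoc, ENNReal.ofReal_mul (by positivity)]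
    _ = ENNReal.ofReal (r ^ (2 * σ - 1) * (1 + r ^ 2) ^ (-(σ + σ)))
          * ENNReal.ofReal (π ^ (σ - 1 / 2) * (Gamma (σ + 1 / 2) / Gamma (σ + σ))
            * ((r / (1 + r ^ 2)) ^ 2 * W) ^ (-(σ + 1 / 2))) := by
      rw [lintegral_sub_right_eq_self fun y : E => ENNReal.ofReal
          (((r / (1 + r ^ 2)) ^ 2 * W + ‖y‖ ^ 2) ^ (-(σ + σ))),
        lintegral_add_norm_sq_rpow_neg hM (by linarith), hdim,
        show σ + σ - (σ - 1 / 2) = σ + 1 / 2 by ring]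
    _ = _ := by
      rw [← rpow_mul_one_add_sq_rpow_mul_div_one_add_sq_rpow hr σ,
        ← ENNReal.ofReal_mul (by positivity), ← ENNReal.ofReal_mul (by positivity),
        ← ENNReal.ofReal_mul (by positivity), mul_rpow (by positivity) hW.le]
      congr 1
      ring

lemma lintegral_sq_add_norm_sub_sq_rpow_neg_mul (hp : 0 < p) (hq : 0 < q) (x : E) :
    ∫⁻ y : E, ENNReal.ofReal ((p ^ 2 + ‖x - y‖ ^ 2) ^ (-poissonExponent E)
        * (q ^ 2 + ‖y‖ ^ 2) ^ (-poissonExponent E))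
      = ENNReal.ofReal (π ^ poissonExponent E / Gamma (poissonExponent E) * ((1 / p + 1 / q)
        * ((p + q) ^ 2 + ‖x‖ ^ 2) ^ (-poissonExponent E))) := by
  have hσ := poissonExponent_pos (E := E)
  have hslice (r : ℝ) (hr : r ∈ Ioi 0) :=
    lintegral_sq_mul_add_norm_sub_sq_add_rpow_neg (E := E) hp hq hr x
  set σ := poissonExponent E
  calc
    _ = ∫⁻ y : E, ENNReal.ofReal (2 * Gamma (σ + σ) / (Gamma σ * Gamma σ))
          * ∫⁻ r in Ioi (0 : ℝ), ENNReal.ofReal (r ^ (2 * σ - 1)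
            * (r ^ 2 * (p ^ 2 + ‖x - y‖ ^ 2) + (q ^ 2 + ‖y‖ ^ 2)) ^ (-(σ + σ))) := by
      refine lintegral_congr fun y => ?_
      rw [lintegral_Ioi_rpow_mul_sq_mul_add_rpow_neg (by positivity) (by positivity) hσ hσ,
        ← ENNReal.ofReal_mul (by positivity)]
      congr 1
      field_simp
    _ = ENNReal.ofReal (2 * Gamma (σ + σ) / (Gamma σ * Gamma σ))
          * ∫⁻ r in Ioi (0 : ℝ), ∫⁻ y : E, ENNReal.ofReal (r ^ (2 * σ - 1)
            * (r ^ 2 * (p ^ 2 + ‖x - y‖ ^ 2) + (q ^ 2 + ‖y‖ ^ 2)) ^ (-(σ + σ))) := by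
      rw [lintegral_const_mul' _ _ ENNReal.ofReal_ne_top, lintegral_lintegral_swap]
      simp only [Function.uncurry_def]
      fun_prop
    _ = ENNReal.ofReal (2 * Gamma (σ + σ) / (Gamma σ * Gamma σ))
          * (ENNReal.ofReal (π ^ (σ - 1 / 2) * (Gamma (σ + 1 / 2) / Gamma (σ + σ)))
            * (ENNReal.ofReal ((1 / p + 1 / q) / 2)
              * ENNReal.ofReal (π ^ (1 / 2 : ℝ) * (Gamma σ / Gamma (σ + 1 / 2))
                * ((p + q) ^ 2 + ‖x‖ ^ 2) ^ (-σ)))) := by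
      rw [setLIntegral_congr_fun measurableSet_Ioi hslice,
        lintegral_const_mul' _ _ ENNReal.ofReal_ne_top,
        lintegral_Ioi_one_add_one_div_sq_mul_comp_mul_sub_div hp hq
          (F := fun w => ENNReal.ofReal (((p + q) ^ 2 + ‖x‖ ^ 2 + w ^ 2) ^ (-(σ + 1 / 2))))
          (by fun_prop) (fun w => by simp only [neg_sq]),
        lintegral_add_sq_rpow_neg_add_half (by positivity) hσ]
    _ = _ := by
      rw [← ENNReal.ofReal_mul (by positivity), ← ENNReal.ofReal_mul (by positivity),
        ← ENNReal.ofReal_mul (by positivity), rpow_sub pi_pos]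
      congr 1
      field_simp

theorem integral_halfSpacePoissonKernel_mul (hp : 0 < p) (hq : 0 < q) (x : E) :
    ∫ y : E, halfSpacePoissonKernel p (x - y) * halfSpacePoissonKernel q y
      = halfSpacePoissonKernel (p + q) x := by
  have hσ := poissonExponent_pos (E := E)
  have hint : ∫ y : E, (p ^ 2 + ‖x - y‖ ^ 2) ^ (-poissonExponent E)
        * (q ^ 2 + ‖y‖ ^ 2) ^ (-poissonExponent E)
      = π ^ poissonExponent E / Gamma (poissonExponent E) * ((1 / p + 1 / q)
        * ((p + q) ^ 2 + ‖x‖ ^ 2) ^ (-poissonExponent E)) := by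
    rw [integral_eq_lintegral_of_nonneg_ae (.of_forall fun y => by positivity)
        (Measurable.aestronglyMeasurable (by fun_prop)),
      lintegral_sq_add_norm_sub_sq_rpow_neg_mul hp hq, ENNReal.toReal_ofReal (by positivity)]
  simp only [halfSpacePoissonKernel, mul_mul_mul_comm _ (p * _), mul_mul_mul_comm p,
    integral_const_mul, hint]
  field_simp
  ring

end PoissonKernel

section RadialLaplacian

variable {E : Type*} [NormedAddCommGroup E] [InnerProductSpace ℝ E]

lemma hasFDerivAt_comp_norm_sq {g : ℝ → ℝ} {g' : ℝ} {x : E} (hg : HasDerivAt g g' (‖x‖ ^ 2)) :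
    HasFDerivAt (fun y => g (‖y‖ ^ 2)) ((2 * g') • innerSL ℝ x) x := by
  refine (hg.comp_hasFDerivAt x (hasStrictFDerivAt_norm_sq x).hasFDerivAt).congr_fderiv ?_
  rw [← Nat.cast_smul_eq_nsmul ℝ, smul_smul, mul_comm, Nat.cast_ofNat]

lemma fderiv_fderiv_comp_norm_sq_apply {g g' : ℝ → ℝ} {g'' : ℝ} {x : E}
    (hg : ∀ᶠ s in 𝓝 (‖x‖ ^ 2), HasDerivAt g (g' s) s) (hg' : HasDerivAt g' g'' (‖x‖ ^ 2))
    (w : E) :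
    fderiv ℝ (fderiv ℝ fun y => g (‖y‖ ^ 2)) x w w
      = 2 * g' (‖x‖ ^ 2) * inner ℝ w w + 4 * g'' * inner ℝ x w ^ 2 := by
  have hfderiv : fderiv ℝ (fun y => g (‖y‖ ^ 2))
      =ᶠ[𝓝 x] fun y => (2 * g' (‖y‖ ^ 2)) • innerSL ℝ y := by
    have hnorm : Tendsto (fun y : E => ‖y‖ ^ 2) (𝓝 x) (𝓝 (‖x‖ ^ 2)) :=
      (continuous_norm.pow 2).continuousAt
    filter_upwards [hnorm.eventually hg] with y hy using (hasFDerivAt_comp_norm_sq hy).fderiv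
  have hsecond := ((hasFDerivAt_comp_norm_sq hg').const_mul 2).smul
    (innerSL ℝ (E := E)).hasFDerivAt
  have happly := congrArg (fun L => L w w) hsecond.fderiv
  rw [hfderiv.fderiv_eq]
  refine happly.trans ?_
  change 2 * g' (‖x‖ ^ 2) * inner ℝ w w + 2 * (2 * g'' * inner ℝ x w) * inner ℝ x w = _
  ring

lemma laplacian_comp_norm_sq [FiniteDimensional ℝ E] {g g' : ℝ → ℝ} {g'' : ℝ} {x : E}
    (hg : ∀ᶠ s in 𝓝 (‖x‖ ^ 2), HasDerivAt g (g' s) s) (hg' : HasDerivAt g' g'' (‖x‖ ^ 2)) :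
    Δ (fun y : E => g (‖y‖ ^ 2)) x
      = 2 * Module.finrank ℝ E * g' (‖x‖ ^ 2) + 4 * ‖x‖ ^ 2 * g'' := by
  rw [laplacian_eq_iteratedFDeriv_stdOrthonormalBasis]
  simp only [iteratedFDeriv_two_apply, Matrix.cons_val_zero, Matrix.cons_val_one,
    fderiv_fderiv_comp_norm_sq_apply hg hg', Finset.sum_add_distrib, ← Finset.mul_sum,
    OrthonormalBasis.sum_sq_inner_left, real_inner_self_eq_norm_sq, OrthonormalBasis.norm_eq_one]
  simp only [one_pow, Finset.sum_const, Finset.card_univ, Fintype.card_fin, nsmul_eq_mul, mul_one]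
  ring

end RadialLaplacian

lemma laplacian3_eq_laplacian (f : EuclideanSpace ℝ (Fin 3) → ℝ) :
    laplacian3 f = Δ f := by
  rw [laplacian_eq_iteratedFDeriv_orthonormalBasis f (EuclideanSpace.basisFun (Fin 3) ℝ)]
  funext x
  simp only [laplacian3, EuclideanSpace.basisFun_apply]

section ExplicitSolution

/-- The profile `u` of the explicit solution of the simple equation. -/
noncomputable def rationalProfile (b c : ℝ) (x : EuclideanSpace ℝ (Fin 3)) : ℝ :=
  c / (1 + b ^ 2 * ‖x‖ ^ 2) ^ 2

/-- The potential `v` of the explicit solution of the simple equation with energy `e`, as a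
function of `r = ‖x‖`. At `r = 0` and `c = 1` the denominator vanishes and the value is `0`. -/
noncomputable def rationalPotential (e b c r : ℝ) : ℝ :=
  12 * c * (b ^ 6 * r ^ 6 * (2 * e - b ^ 2) + b ^ 4 * r ^ 4 * (9 * e - 7 * b ^ 2)
      + 4 * b ^ 2 * r ^ 2 * (3 * e - 2 * b ^ 2) + (5 * e + 16 * b ^ 2))
    / ((1 + b ^ 2 * r ^ 2) ^ 2 * (4 + b ^ 2 * r ^ 2) ^ 2 * ((1 + b ^ 2 * r ^ 2) ^ 2 - c))

lemma hasDerivAt_const_div_one_add_mul_pow {a s : ℝ} (c : ℝ) (n : ℕ) (hs : 1 + a * s ≠ 0) :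
    HasDerivAt (fun s => c / (1 + a * s) ^ n) (-(n * a * c) / (1 + a * s) ^ (n + 1)) s := by
  have hlin : HasDerivAt (fun s => 1 + a * s) a s := by
    simpa using ((hasDerivAt_id s).const_mul a).const_add 1
  refine ((hasDerivAt_const s c).div (hlin.pow n) (pow_ne_zero n hs)).congr_deriv ?_
  rcases n with _ | n
  · simp
  · simp only [Pi.pow_apply, Nat.add_sub_cancel]
    field_simp
    ring

lemma laplacian3_rationalProfile (b c : ℝ) (x : EuclideanSpace ℝ (Fin 3)) :
    laplacian3 (rationalProfile b c) x
      = 24 * c * b ^ 4 * ‖x‖ ^ 2 / (1 + b ^ 2 * ‖x‖ ^ 2) ^ 4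
        - 12 * c * b ^ 2 / (1 + b ^ 2 * ‖x‖ ^ 2) ^ 3 := by
  have hne : 1 + b ^ 2 * ‖x‖ ^ 2 ≠ 0 := by positivity
  have hne_near : ∀ᶠ s in 𝓝 (‖x‖ ^ 2), 1 + b ^ 2 * s ≠ 0 :=
    ContinuousAt.eventually_ne (by fun_prop) hne
  have hlaplacian := laplacian_comp_norm_sq
    (hne_near.mono fun s hs => hasDerivAt_const_div_one_add_mul_pow c 2 hs)
    (hasDerivAt_const_div_one_add_mul_pow (-((2 : ℕ) * b ^ 2 * c)) 3 hne)
  rw [laplacian3_eq_laplacian]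
  refine hlaplacian.trans ?_
  rw [finrank_euclideanSpace_fin]
  push_cast
  ring

lemma poissonExponent_euclideanSpace_fin_three :
    poissonExponent (EuclideanSpace ℝ (Fin 3)) = 2 := by
  norm_num [poissonExponent]

lemma halfSpacePoissonKernel_euclideanSpace_fin_three (p : ℝ) (x : EuclideanSpace ℝ (Fin 3)) :
    halfSpacePoissonKernel p x = p / (π ^ 2 * (p ^ 2 + ‖x‖ ^ 2) ^ 2) := by
  rw [halfSpacePoissonKernel, poissonExponent_euclideanSpace_fin_three, Gamma_two,
    rpow_neg (by positivity), rpow_two, rpow_two]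
  field_simp

lemma rationalProfile_eq_mul_halfSpacePoissonKernel {b : ℝ} (hb : 0 < b) (c : ℝ)
    (x : EuclideanSpace ℝ (Fin 3)) :
    rationalProfile b c x = c * π ^ 2 / b ^ 3 * halfSpacePoissonKernel (1 / b) x := by
  rw [halfSpacePoissonKernel_euclideanSpace_fin_three, rationalProfile]
  field_simp

lemma integral_rationalProfile_mul {b : ℝ} (hb : 0 < b) (c : ℝ)
    (x : EuclideanSpace ℝ (Fin 3)) :
    ∫ y, rationalProfile b c (x - y) * rationalProfile b c y
      = 2 * π ^ 2 * c ^ 2 / (b ^ 3 * (4 + b ^ 2 * ‖x‖ ^ 2) ^ 2) := by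
  simp only [rationalProfile_eq_mul_halfSpacePoissonKernel hb, mul_mul_mul_comm (c * π ^ 2 / b ^ 3),
    integral_const_mul]
  rw [integral_halfSpacePoissonKernel_mul (by positivity) (by positivity),
    halfSpacePoissonKernel_euclideanSpace_fin_three]
  field_simp
  ring

lemma simple_equation_potential_rationalProfile (e : ℝ) {b c : ℝ} (hb : 0 < b) (hc : c ≠ 0)
    (x : EuclideanSpace ℝ (Fin 3)) :
    (-(laplacian3 (rationalProfile b c) x) + 2 * e * (2 * rationalProfile b c x
        - b ^ 3 / (c * π ^ 2) * ∫ y, rationalProfile b c (x - y) * rationalProfile b c y))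
      / (1 - rationalProfile b c x) = rationalPotential e b c ‖x‖ := by
  have hD : 1 + b ^ 2 * ‖x‖ ^ 2 ≠ 0 := by positivity
  -- The factor `(1 + b²‖x‖²)² - c` is split off before clearing denominators: it can vanish.
  have hone_sub : 1 - rationalProfile b c x
      = ((1 + b ^ 2 * ‖x‖ ^ 2) ^ 2 - c) / (1 + b ^ 2 * ‖x‖ ^ 2) ^ 2 := by
    rw [rationalProfile, sub_div, div_self (pow_ne_zero 2 hD)]
  rw [hone_sub, laplacian3_rationalProfile, integral_rationalProfile_mul hb, rationalProfile,
    rationalPotential, ← div_div _ _ ((1 + b ^ 2 * ‖x‖ ^ 2) ^ 2 - c), div_div_eq_mul_div]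
  congr 1
  field_simp
  ring

lemma rationalPotential_nonneg {e b c : ℝ} (heb : 7 * b ^ 2 ≤ 9 * e) (hc : 0 ≤ c) (hc1 : c ≤ 1)
    (r : ℝ) : 0 ≤ rationalPotential e b c r := by
  have hb2 := sq_nonneg b
  have hcoeff_six : 0 ≤ 2 * e - b ^ 2 := by linarith
  have hcoeff_two : 0 ≤ 3 * e - 2 * b ^ 2 := by linarith
  have hcoeff_zero : 0 ≤ 5 * e + 16 * b ^ 2 := by linarith
  have hden : 0 ≤ (1 + b ^ 2 * r ^ 2) ^ 2 - c :=
    sub_nonneg.2 (hc1.trans (one_le_pow₀ (le_add_of_nonneg_right (by positivity))))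
  unfold rationalPotential
  positivity

end ExplicitSolution

theorem stmt_5 (e b c : ℝ) (he : 0 < e) (hb : 0 < b) (hc : 0 < c)
    (heb : 7 / 9 ≤ e / b ^ 2) (hc1 : c ≤ 1)
    (u : EuclideanSpace ℝ (Fin 3) → ℝ)
    (hu : ∀ x, u x = c / (1 + b ^ 2 * ‖x‖ ^ 2) ^ 2)
    (ρ : ℝ) (hρ : ρ = b ^ 3 / (c * π ^ 2))
    (v : EuclideanSpace ℝ (Fin 3) → ℝ)
    (hv : ∀ x, v x = (-(laplacian3 u x)
        + 2 * e * (2 * u x - ρ * ∫ y, u (x - y) * u y)) / (1 - u x)) :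
    ∀ x, v x = 12 * c * (b ^ 6 * ‖x‖ ^ 6 * (2 * e - b ^ 2)
          + b ^ 4 * ‖x‖ ^ 4 * (9 * e - 7 * b ^ 2)
          + 4 * b ^ 2 * ‖x‖ ^ 2 * (3 * e - 2 * b ^ 2)
          + (5 * e + 16 * b ^ 2))
        / ((1 + b ^ 2 * ‖x‖ ^ 2) ^ 2 * (4 + b ^ 2 * ‖x‖ ^ 2) ^ 2
            * ((1 + b ^ 2 * ‖x‖ ^ 2) ^ 2 - c))
      ∧ 0 ≤ v x := by
  intro x
  obtain rfl : u = rationalProfile b c := funext hu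
  have hv_eq : v x = rationalPotential e b c ‖x‖ := by
    rw [hv, hρ, simple_equation_potential_rationalProfile e hb hc.ne']
  have heb' : 7 * b ^ 2 ≤ 9 * e := by
    rw [le_div_iff₀ (pow_pos hb 2)] at heb
    linarith
  exact ⟨hv_eq, hv_eq ▸ rationalPotential_nonneg heb' hc.le hc1 ‖x‖⟩
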